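/- Let H be a Hilbert space with orthonormal basis (e_i)_{i∈I} and let G be a finite collection of pairwise disjoint finite groups g ⊆ I. Let 𝒜 := Σ_1 ∩ {u ∈ H : ‖u‖_H = 1} be the set of unit-norm 1-group-sparse vectors, where Σ_1 := {x ∈ H : x = x_g for some g ∈ G}, and let E := span{e_i : i ∈ ∪_{g∈G} g}. Then the atomic norm induced by 𝒜 satisfies: ‖x‖_𝒜 = Σ_{g∈G} ‖x_g‖_H for every x ∈ E, and ‖x‖_𝒜 = +∞ for every x ∉ E. -/

import Mathlib

noncomputable section
open scoped ENNReal NNReal Pointwise RealInnerProductSpace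
open Filter Set Classical MeasureTheory ProbabilityTheory

/-- The secant set `Σ - Σ` of a model set. -/
def secantSet {H : Type*} [NormedAddCommGroup H] (S : Set H) : Set H :=
  {u | ∃ x ∈ S, ∃ y ∈ S, u = x - y}

/-- The normalized secant set of a model set. -/
def normSecant {H : Type*} [NormedAddCommGroup H] [NormedSpace ℝ H] (S : Set H) : Set H :=
  {z | ∃ y ∈ secantSet S, y ≠ 0 ∧ z = ‖y‖⁻¹ • y}

/-- The atomic "norm" induced by a set of atoms `A`: `‖x‖_A = inf {t ≥ 0 : x ∈ t·cl(conv A)}`,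
with value `+∞` when no such `t` exists. -/
def atomicNorm {H : Type*} [NormedAddCommGroup H] [NormedSpace ℝ H] (A : Set H) (x : H) :
    ℝ≥0∞ :=
  sInf {t : ℝ≥0∞ | ∃ r : ℝ, 0 ≤ r ∧ t = ENNReal.ofReal r ∧ x ∈ r • closure (convexHull ℝ A)}


/-- The restriction `x_g` of `x` to the group of coordinates `g`. -/
def groupProj {H : Type*} [NormedAddCommGroup H] [InnerProductSpace ℝ H] {I : Type*}
    (e : I → H) (g : Finset I) (x : H) : H :=
  ∑ i ∈ g, ⟪x, e i⟫ • e i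

/-- The restriction `x_T` of `x` to a set of groups `T`. -/
def groupRestrict {H : Type*} [NormedAddCommGroup H] [InnerProductSpace ℝ H] {I : Type*}
    (e : I → H) (T : Finset (Finset I)) (x : H) : H :=
  ∑ g ∈ T, groupProj e g x

/-- The `k`-group-sparse model `Σ_k` associated to the group collection `G`. -/
def kGroupSparse {H : Type*} [NormedAddCommGroup H] [InnerProductSpace ℝ H] {I : Type*}
    (e : I → H) (G : Finset (Finset I)) (k : ℕ) : Set H :=
  {x | ∃ T ⊆ G, T.card ≤ k ∧ x = groupRestrict e T x}

/-!
The closed convex hull of the set of atoms is exactly the unit ball of the group norm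
`x ↦ ∑ g ∈ G, ‖x_g‖` inside `E`, so the atomic norm, being its gauge, is that group norm.
Every atom lies in this ball, which is convex and, as `E` is finite-dimensional, closed.
Conversely, a point `x` of the ball is the combination `∑ g ∈ G, ‖x_g‖ • (x_g / ‖x_g‖)` of atoms
with nonnegative weights of sum at most `1`, and the missing weight is put on `0`, which is the
midpoint of an atom and its opposite.
-/

section Convexity

variable {R E ι : Type*} [Field R] [LinearOrder R] [IsStrictOrderedRing R] [AddCommGroup E]
  [Module R E] {s : Set E}

theorem sum_smul_mem_of_convex_of_sum_le_one (hs : Convex R s) (hs₀ : (0 : E) ∈ s)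
    {t : Finset ι} {w : ι → R} {z : ι → E} (hw₀ : ∀ i ∈ t, 0 ≤ w i)
    (hw₁ : ∑ i ∈ t, w i ≤ 1) (hz : ∀ i ∈ t, z i ∈ s) : ∑ i ∈ t, w i • z i ∈ s := by
  rcases (Finset.sum_nonneg hw₀).eq_or_lt with hsum | hsum
  · have hw : ∀ i ∈ t, w i = 0 := (Finset.sum_eq_zero_iff_of_nonneg hw₀).1 hsum.symm
    rwa [Finset.sum_eq_zero fun i hi => by rw [hw i hi, zero_smul]]
  · have hcenter : (∑ i ∈ t, w i) • t.centerMass w z ∈ s :=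
      hs.smul_mem_of_zero_mem hs₀ (hs.centerMass_mem hw₀ hsum hz) ⟨hsum.le, hw₁⟩
    rwa [Finset.centerMass, smul_inv_smul₀ hsum.ne'] at hcenter

theorem zero_mem_convexHull_of_neg_mem {a : E} (ha : a ∈ s) (hneg : -a ∈ s) :
    (0 : E) ∈ convexHull R s := by
  rw [← midpoint_self_neg R a]
  exact (convex_convexHull R s).midpoint_mem (subset_convexHull R s ha)
    (subset_convexHull R s hneg)

end Convexity

section AtomicNorm

theorem mem_smul_inter_closedBall_iff {V : Type*} [AddCommGroup V] [Module ℝ V]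
    {E : Submodule ℝ V} {p : Seminorm ℝ V} (hp : ∀ x ∈ E, p x = 0 → x = 0) {r : ℝ} (hr : 0 ≤ r)
    {x : V} : x ∈ r • ((E : Set V) ∩ p.closedBall 0 1) ↔ x ∈ E ∧ p x ≤ r := by
  rcases hr.eq_or_lt with rfl | hr
  · have hne : ((E : Set V) ∩ p.closedBall 0 1).Nonempty :=
      ⟨0, E.zero_mem, p.mem_closedBall_self zero_le_one⟩
    rw [Set.zero_smul_set hne, Set.mem_zero]
    constructor
    · rintro rfl
      exact ⟨E.zero_mem, (map_zero p).le⟩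
    · exact fun ⟨hx, hpx⟩ => hp x hx (le_antisymm hpx (apply_nonneg p x))
  · rw [Set.mem_smul_set_iff_inv_smul_mem₀ hr.ne', Set.mem_inter_iff, SetLike.mem_coe,
      E.smul_mem_iff (inv_ne_zero hr.ne'), p.mem_closedBall_zero, map_smul_eq_mul,
      Real.norm_of_nonneg (inv_nonneg.2 hr.le), inv_mul_le_one₀ hr]

variable {V : Type*} [NormedAddCommGroup V] [NormedSpace ℝ V] {A : Set V} {E : Submodule ℝ V}
  {p : Seminorm ℝ V}

theorem atomicNorm_eq_ofReal_seminorm (hA : closure (convexHull ℝ A) = ↑E ∩ p.closedBall 0 1)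
    (hp : ∀ x ∈ E, p x = 0 → x = 0) {x : V} (hx : x ∈ E) :
    atomicNorm A x = ENNReal.ofReal (p x) := by
  rw [atomicNorm, hA]
  apply le_antisymm
  · exact sInf_le ⟨p x, apply_nonneg p x, rfl,
      (mem_smul_inter_closedBall_iff hp (apply_nonneg p x)).2 ⟨hx, le_rfl⟩⟩
  · refine le_sInf ?_
    rintro _ ⟨r, hr, rfl, hxr⟩
    exact ENNReal.ofReal_le_ofReal ((mem_smul_inter_closedBall_iff hp hr).1 hxr).2

theorem atomicNorm_eq_top_of_notMem (hA : closure (convexHull ℝ A) ⊆ E) {x : V} (hx : x ∉ E) :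
    atomicNorm A x = ⊤ := by
  rw [atomicNorm, sInf_eq_top]
  rintro _ ⟨r, -, rfl, z, hz, rfl⟩
  exact absurd (E.smul_mem r (hA hz)) hx

end AtomicNorm

section GroupSparse

variable {H : Type*} [NormedAddCommGroup H] [InnerProductSpace ℝ H] {I : Type*} {e : I → H}
  {G : Finset (Finset I)} {g g' : Finset I} {x : H}

/-- The map `x ↦ x_g` of `groupProj`, bundled as a continuous linear map. -/
def groupProjCLM (e : I → H) (g : Finset I) : H →L[ℝ] H :=
  ∑ i ∈ g, (innerSL ℝ (e i)).smulRight (e i)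

@[simp]
theorem groupProjCLM_apply (e : I → H) (g : Finset I) (x : H) :
    groupProjCLM e g x = groupProj e g x := by
  simp [groupProjCLM, groupProj, real_inner_comm]

/-- The group norm `x ↦ ∑ g ∈ G, ‖x_g‖`; on all of `H` it is only a seminorm, as it vanishes on
the vectors orthogonal to every `e i` with `i` in some group. -/
def groupSeminorm (e : I → H) (G : Finset (Finset I)) : Seminorm ℝ H :=
  ∑ g ∈ G, (normSeminorm ℝ H).comp (groupProjCLM e g).toLinearMap

/-- The space `E` spanned by the vectors `e i` whose index belongs to some group of `G`. -/
def groupSpan (e : I → H) (G : Finset (Finset I)) : Submodule ℝ H :=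
  Submodule.span ℝ (e '' {i | ∃ g ∈ G, i ∈ g})

/-- The atoms `𝒜`: the unit vectors supported on a single group of `G`. -/
def groupAtoms (e : I → H) (G : Finset (Finset I)) : Set H :=
  {y | ∃ g ∈ G, y = groupProj e g y} ∩ {u | ‖u‖ = 1}

theorem groupSeminorm_apply (e : I → H) (G : Finset (Finset I)) (x : H) :
    groupSeminorm e G x = ∑ g ∈ G, ‖groupProj e g x‖ := by
  simp [groupSeminorm, sum_apply]

theorem continuous_groupSeminorm (e : I → H) (G : Finset (Finset I)) :
    Continuous (groupSeminorm e G) := by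
  have heq : ⇑(groupSeminorm e G) = fun x => ∑ g ∈ G, ‖groupProjCLM e g x‖ := by
    ext x
    simp only [groupSeminorm_apply, groupProjCLM_apply]
  rw [heq]
  fun_prop

theorem isClosed_groupSpan (e : I → H) (G : Finset (Finset I)) :
    IsClosed (groupSpan e G : Set H) := by
  have hfin : {i | ∃ g ∈ G, i ∈ g}.Finite :=
    (G.biUnion id).finite_toSet.subset fun i hi => by simpa using hi
  have : FiniteDimensional ℝ (groupSpan e G) := .span_of_finite ℝ (hfin.image e)
  exact (groupSpan e G).closed_of_finiteDimensional

theorem groupProj_mem_groupSpan (e : I → H) (hg : g ∈ G) (x : H) :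
    groupProj e g x ∈ groupSpan e G :=
  Submodule.sum_mem _ fun i hi =>
    Submodule.smul_mem _ _ (Submodule.subset_span ⟨i, ⟨g, hg, hi⟩, rfl⟩)

theorem groupProj_apply_of_orthonormal [DecidableEq I] (he : Orthonormal ℝ e) (g : Finset I)
    (i : I) : groupProj e g (e i) = if i ∈ g then e i else 0 := by
  simp [groupProj, orthonormal_iff_ite.1 he]

theorem groupProj_groupProj_eq_inter [DecidableEq I] (he : Orthonormal ℝ e) (g g' : Finset I)
    (x : H) : groupProj e g (groupProj e g' x) = groupProj e (g' ∩ g) x := by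
  rw [← groupProjCLM_apply, groupProj, map_sum]
  simp only [map_smul, groupProjCLM_apply, groupProj_apply_of_orthonormal he, smul_ite, smul_zero,
    Finset.sum_ite_mem]
  rfl

theorem groupProj_groupProj_self (he : Orthonormal ℝ e) (g : Finset I) (x : H) :
    groupProj e g (groupProj e g x) = groupProj e g x := by
  rw [groupProj_groupProj_eq_inter he, Finset.inter_self]

theorem groupProj_groupProj_of_disjoint (he : Orthonormal ℝ e) (hgg' : Disjoint g g') (x : H) :
    groupProj e g (groupProj e g' x) = 0 := by
  rw [groupProj_groupProj_eq_inter he, Finset.disjoint_iff_inter_eq_empty.1 hgg'.symm, groupProj,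
    Finset.sum_empty]

theorem sum_groupProj_eq_self (he : Orthonormal ℝ e)
    (hdisj : (G : Set (Finset I)).Pairwise Disjoint) (hx : x ∈ groupSpan e G) :
    ∑ g ∈ G, groupProj e g x = x := by
  have hgenerators : Set.EqOn (∑ g ∈ G, groupProjCLM e g : H →L[ℝ] H) (ContinuousLinearMap.id ℝ H)
      (e '' {i | ∃ g ∈ G, i ∈ g}) := by
    rintro _ ⟨i, ⟨g, hg, hi⟩, rfl⟩
    have hother : ∀ g' ∈ G, g' ≠ g → groupProj e g' (e i) = 0 := fun g' hg' hne => by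
      rw [groupProj_apply_of_orthonormal he, if_neg (Finset.disjoint_right.1 (hdisj hg' hg hne) hi)]
    simp only [sum_apply, groupProjCLM_apply, ContinuousLinearMap.id_apply]
    rw [Finset.sum_eq_single_of_mem g hg hother, groupProj_apply_of_orthonormal he, if_pos hi]
  simpa using LinearMap.eqOn_span hgenerators hx

theorem eq_zero_of_groupSeminorm_eq_zero (he : Orthonormal ℝ e)
    (hdisj : (G : Set (Finset I)).Pairwise Disjoint) (hx : x ∈ groupSpan e G)
    (hx₀ : groupSeminorm e G x = 0) : x = 0 := by
  rw [groupSeminorm_apply, Finset.sum_eq_zero_iff_of_nonneg fun g _ => norm_nonneg _] at hx₀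
  rw [← sum_groupProj_eq_self he hdisj hx]
  exact Finset.sum_eq_zero fun g hg => norm_eq_zero.1 (hx₀ g hg)

theorem groupSeminorm_eq_norm_of_eq_groupProj (he : Orthonormal ℝ e)
    (hdisj : (G : Set (Finset I)).Pairwise Disjoint) (hg : g ∈ G) (hx : x = groupProj e g x) :
    groupSeminorm e G x = ‖x‖ := by
  have hother : ∀ g' ∈ G, g' ≠ g → ‖groupProj e g' x‖ = 0 := fun g' hg' hne => by
    rw [hx, groupProj_groupProj_of_disjoint he (hdisj hg' hg hne), norm_zero]
  rw [groupSeminorm_apply, Finset.sum_eq_single_of_mem g hg hother, ← hx]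

theorem groupAtoms_subset_groupSpan_inter_closedBall (he : Orthonormal ℝ e)
    (hdisj : (G : Set (Finset I)).Pairwise Disjoint) :
    groupAtoms e G ⊆ ↑(groupSpan e G) ∩ (groupSeminorm e G).closedBall 0 1 := by
  rintro y ⟨⟨g, hg, hy⟩, hnorm⟩
  constructor
  · rw [hy]
    exact groupProj_mem_groupSpan e hg y
  · rw [Seminorm.mem_closedBall_zero, groupSeminorm_eq_norm_of_eq_groupProj he hdisj hg hy]
    exact hnorm.le

theorem neg_mem_groupAtoms (hx : x ∈ groupAtoms e G) : -x ∈ groupAtoms e G := by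
  obtain ⟨⟨g, hg, hxg⟩, hnorm⟩ := hx
  refine ⟨⟨g, hg, ?_⟩, (norm_neg x).trans hnorm⟩
  rw [← groupProjCLM_apply, map_neg, groupProjCLM_apply, ← hxg]

theorem orthonormal_mem_groupAtoms (he : Orthonormal ℝ e) (hg : g ∈ G) {i : I} (hi : i ∈ g) :
    e i ∈ groupAtoms e G :=
  ⟨⟨g, hg, by rw [groupProj_apply_of_orthonormal he, if_pos hi]⟩, he.norm_eq_one i⟩

theorem zero_mem_convexHull_groupAtoms (he : Orthonormal ℝ e) (hG : ∃ g ∈ G, g.Nonempty) :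
    (0 : H) ∈ convexHull ℝ (groupAtoms e G) := by
  obtain ⟨g, hg, i, hi⟩ := hG
  have hatom := orthonormal_mem_groupAtoms he hg hi
  exact zero_mem_convexHull_of_neg_mem hatom (neg_mem_groupAtoms hatom)

theorem normalize_groupProj_mem_groupAtoms (he : Orthonormal ℝ e) (hg : g ∈ G)
    (hx : groupProj e g x ≠ 0) : NormedSpace.normalize (groupProj e g x) ∈ groupAtoms e G := by
  refine ⟨⟨g, hg, ?_⟩, NormedSpace.norm_normalize_eq_one_iff.2 hx⟩
  rw [NormedSpace.normalize, ← groupProjCLM_apply e g (_ • _), map_smul, groupProjCLM_apply,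
    groupProj_groupProj_self he]

theorem groupSpan_inter_closedBall_subset_convexHull (he : Orthonormal ℝ e)
    (hG : ∃ g ∈ G, g.Nonempty) (hdisj : (G : Set (Finset I)).Pairwise Disjoint) :
    ↑(groupSpan e G) ∩ (groupSeminorm e G).closedBall 0 1 ⊆ convexHull ℝ (groupAtoms e G) := by
  rintro x ⟨hx, hball⟩
  rw [Seminorm.mem_closedBall_zero, groupSeminorm_apply] at hball
  have hzero := zero_mem_convexHull_groupAtoms he hG
  have hdirection : ∀ g ∈ G,
      NormedSpace.normalize (groupProj e g x) ∈ convexHull ℝ (groupAtoms e G) := by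
    intro g hg
    by_cases hxg : groupProj e g x = 0
    · rwa [hxg, NormedSpace.normalize_zero_eq_zero]
    · exact subset_convexHull ℝ _ (normalize_groupProj_mem_groupAtoms he hg hxg)
  have hdecomp : ∑ g ∈ G, ‖groupProj e g x‖ • NormedSpace.normalize (groupProj e g x) = x := by
    simp only [NormedSpace.norm_smul_normalize, sum_groupProj_eq_self he hdisj hx]
  rw [← hdecomp]
  exact sum_smul_mem_of_convex_of_sum_le_one (convex_convexHull ℝ _) hzero
    (fun g _ => norm_nonneg _) hball hdirection

theorem closure_convexHull_groupAtoms (he : Orthonormal ℝ e) (hG : ∃ g ∈ G, g.Nonempty)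
    (hdisj : (G : Set (Finset I)).Pairwise Disjoint) :
    closure (convexHull ℝ (groupAtoms e G)) =
      ↑(groupSpan e G) ∩ (groupSeminorm e G).closedBall 0 1 := by
  have hconvex : Convex ℝ (↑(groupSpan e G) ∩ (groupSeminorm e G).closedBall 0 1) :=
    (groupSpan e G).convex.inter ((groupSeminorm e G).convex_closedBall 0 1)
  have hclosed : IsClosed (↑(groupSpan e G) ∩ (groupSeminorm e G).closedBall 0 1) := by
    rw [Seminorm.closedBall_zero_eq]
    exact (isClosed_groupSpan e G).inter
      (isClosed_le (continuous_groupSeminorm e G) continuous_const)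
  have hatoms := groupAtoms_subset_groupSpan_inter_closedBall he hdisj
  exact Subset.antisymm (closure_minimal (convexHull_min hatoms hconvex) hclosed)
    ((groupSpan_inter_closedBall_subset_convexHull he hG hdisj).trans subset_closure)

theorem stmt17_general (he : Orthonormal ℝ e) (hG : ∃ g ∈ G, g.Nonempty)
    (hdisj : (G : Set (Finset I)).Pairwise Disjoint) :
    (∀ x ∈ groupSpan e G,
      atomicNorm (groupAtoms e G) x = ENNReal.ofReal (∑ g ∈ G, ‖groupProj e g x‖)) ∧
    (∀ x ∉ groupSpan e G, atomicNorm (groupAtoms e G) x = ⊤) := by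
  have hball := closure_convexHull_groupAtoms he hG hdisj
  constructor
  · intro x hx
    rw [← groupSeminorm_apply]
    exact atomicNorm_eq_ofReal_seminorm hball
      (fun y hy => eq_zero_of_groupSeminorm_eq_zero he hdisj hy) hx
  · exact fun x hx => atomicNorm_eq_top_of_notMem (hball.subset.trans inter_subset_left) hx

end GroupSparse

/-- the atomic norm induced by the unit-norm `1`-group-sparse vectors is the
group norm `Σ_{g ∈ G} ‖x_g‖` on the span `E` of the covered coordinates, and `+∞` off `E`. -/
theorem stmt17 {H : Type*} [NormedAddCommGroup H] [InnerProductSpace ℝ H] [CompleteSpace H]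
    {I : Type*} (B : HilbertBasis I ℝ H) (G : Finset (Finset I)) (hG : G.Nonempty)
    (hne : ∀ g ∈ G, g.Nonempty)
    (hdisj : ∀ g ∈ G, ∀ g' ∈ G, g ≠ g' → Disjoint g g') :
    (∀ x ∈ Submodule.span ℝ ((fun i => (B i : H)) '' {i : I | ∃ g ∈ G, i ∈ g}),
      atomicNorm
          ({y : H | ∃ g ∈ G, y = groupProj (fun i => B i) g y} ∩ {u : H | ‖u‖ = 1}) x
        = ENNReal.ofReal (∑ g ∈ G, ‖groupProj (fun i => B i) g x‖)) ∧
    (∀ x : H, x ∉ Submodule.span ℝ ((fun i => (B i : H)) '' {i : I | ∃ g ∈ G, i ∈ g}) →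
      atomicNorm
          ({y : H | ∃ g ∈ G, y = groupProj (fun i => B i) g y} ∩ {u : H | ‖u‖ = 1}) x
        = ⊤) :=
  stmt17_general B.orthonormal (hG.imp fun g hg => ⟨hg, hne g hg⟩)
    fun g hg g' hg' => hdisj g hg g' hg'
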